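/- Let ℂ∞ denote the Riemann sphere (OnePoint ℂ). Let U ⊆ ℂ∞ be a simply connected open set whose boundary X = ∂U contains at least two points, and let V ≠ U be a connected component of ℂ∞ ∖ X such that ∂V has nonempty interior relative to X. Assume X is irreducible about some finite subset of X, and assume ∂V is NOT monostratic, i.e., ∂V cannot be written as (⋃_{i∈ℕ} X_i) ∪ (⋃_{i∈ℕ} A_i) with each X_i an indecomposable subcontinuum of ∂V and each A_i a subcontinuum of ∂V nowhere dense in ∂V. Then ∂V contains an indecomposable subcontinuum with nonempty interior relative to X. -/

import Mathlib

open Set Topology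

/-- The Riemann sphere, as the one-point compactification of `ℂ`. -/
abbrev RiemannSphere : Type := OnePoint ℂ

/-- A subcontinuum (of an ambient space) is a nonempty compact connected set;
nonemptiness is part of `IsConnected`. -/
def IsSubcontinuum {α : Type*} [TopologicalSpace α] (K : Set α) : Prop :=
  IsCompact K ∧ IsConnected K

/-- A set is indecomposable if it is not the union of two of its proper subcontinua. -/
def IsIndecomposableSet {α : Type*} [TopologicalSpace α] (K : Set α) : Prop :=
  ∀ K₁ K₂ : Set α, IsSubcontinuum K₁ → K₁ ⊆ K → IsSubcontinuum K₂ → K₂ ⊆ K →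
    K₁ ∪ K₂ = K → K₁ = K ∨ K₂ = K

/-- `Z` is nowhere dense in `X` (in the subspace topology of `X`). -/
def NowhereDenseIn {α : Type*} [TopologicalSpace α] (X Z : Set α) : Prop :=
  IsNowhereDense ((↑) ⁻¹' Z : Set X)

/-- The interior of `Z` relative to `X`, i.e. the interior of the corresponding subset
of the subspace `X`. -/
def relInterior {α : Type*} [TopologicalSpace α] (X Z : Set α) : Set X :=
  interior ((↑) ⁻¹' Z : Set X)

/-- A set is monostratic if it is the countable union of indecomposable subcontinua
and nowhere dense subcontinua of itself. -/
def IsMonostratic {α : Type*} [TopologicalSpace α] (Z : Set α) : Prop :=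
  ∃ Xf Af : ℕ → Set α,
    (∀ i, Xf i ⊆ Z ∧ IsSubcontinuum (Xf i) ∧ IsIndecomposableSet (Xf i)) ∧
    (∀ i, Af i ⊆ Z ∧ IsSubcontinuum (Af i) ∧ NowhereDenseIn Z (Af i)) ∧
    Z = (⋃ i, Xf i) ∪ ⋃ i, Af i

/-!
Put `X = ∂U` and `Y = ∂V`. By Janiszewski's theorem, proved with continuous logarithms, `Y` is
discoherent: if `Y = Y₁ ∪ Y₂` with `Y₁`, `Y₂` closed and proper, then `U` and `V` lie in one
component of the complement of each `Yᵢ`, so a connected `Y₁ ∩ Y₂` would let them be joined off `Y`.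
Irreducibility of `X` about a finite set yields an open set `G` meeting `Y` which every subcontinuum
of `Y` joining two given subcontinua `P` and `L` must cover.

If no such continuum is indecomposable, then a minimal one is a union of two proper subcontinua,
each missing one end. Enlarging the ends by these halves, once on each side, gives a smaller `G`
covered by a continuum `N` that misses the original `P` and `L`. By discoherence a component of
`Y \ G` meets both `P` and `L`, so it joins the ends without meeting `G`, a contradiction.
-/

section Continua

variable {α : Type*} [TopologicalSpace α]

theorem isSubcontinuum_singleton (a : α) : IsSubcontinuum {a} :=
  ⟨isCompact_singleton, isConnected_singleton⟩

theorem IsSubcontinuum.union {K L : Set α} (hK : IsSubcontinuum K) (hL : IsSubcontinuum L)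
    (h : (K ∩ L).Nonempty) : IsSubcontinuum (K ∪ L) :=
  ⟨hK.1.union hL.1, hK.2.union h hL.2⟩

theorem IsSubcontinuum.union_biUnion {ι : Type*} {K : Set α} (hK : IsSubcontinuum K) {A : Set ι}
    (hA : A.Finite) {C : ι → Set α} (hC : ∀ a ∈ A, IsSubcontinuum (C a))
    (hKC : ∀ a ∈ A, (K ∩ C a).Nonempty) : IsSubcontinuum (K ∪ ⋃ a ∈ A, C a) := by
  obtain ⟨k, hk⟩ := hK.2.nonempty
  refine ⟨hK.1.union (hA.isCompact_biUnion fun a ha => (hC a ha).1), ⟨k, Or.inl hk⟩,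
    isPreconnected_of_forall k ?_⟩
  rintro y (hy | hy)
  · exact ⟨K, subset_union_left, hk, hy, hK.2.isPreconnected⟩
  · obtain ⟨a, ha, hya⟩ := mem_iUnion₂.1 hy
    exact ⟨K ∪ C a, union_subset_union_right K (subset_biUnion_of_mem ha), Or.inl hk, Or.inr hya,
      (hK.union (hC a ha) (hKC a ha)).2.isPreconnected⟩

theorem closure_connectedComponentIn_inter_subset (O : Set α) (x : α) :
    closure (connectedComponentIn O x) ∩ O ⊆ connectedComponentIn O x := by
  by_cases hx : x ∈ O
  · exact (isPreconnected_connectedComponentIn.subset_closure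
      (subset_inter subset_closure (connectedComponentIn_subset O x))
      inter_subset_left).subset_connectedComponentIn
      ⟨subset_closure (mem_connectedComponentIn hx), hx⟩ inter_subset_right
  · simp only [connectedComponentIn_eq_empty hx, closure_empty, empty_inter, empty_subset]

variable [T2Space α]

theorem IsSubcontinuum.isClosed {K : Set α} (hK : IsSubcontinuum K) : IsClosed K :=
  hK.1.isClosed

theorem isSubcontinuum_connectedComponentIn {D : Set α} (hD : IsCompact D) {x : α}
    (hx : x ∈ D) : IsSubcontinuum (connectedComponentIn D x) := by
  refine ⟨hD.of_isClosed_subset (isClosed_of_closure_subset fun y hy => ?_)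
    (connectedComponentIn_subset D x), isConnected_connectedComponentIn_iff.2 hx⟩
  exact closure_connectedComponentIn_inter_subset D x
    ⟨hy, closure_minimal (connectedComponentIn_subset D x) hD.isClosed hy⟩

theorem exists_isClopen_of_connectedComponent_subset {β : Type*} [TopologicalSpace β]
    [CompactSpace β] [T2Space β] {x : β} {O : Set β} (hO : IsOpen O)
    (hxO : connectedComponent x ⊆ O) : ∃ E : Set β, IsClopen E ∧ x ∈ E ∧ E ⊆ O := by
  have : Nonempty {E : Set β // IsClopen E ∧ x ∈ E} := ⟨⟨univ, isClopen_univ, mem_univ x⟩⟩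
  rw [connectedComponent_eq_iInter_isClopen] at hxO
  obtain ⟨⟨E, hE, hxE⟩, hEO⟩ := exists_subset_nhds_of_isCompact
    (V := fun E : {E : Set β // IsClopen E ∧ x ∈ E} => (E : Set β))
    (fun E F => ⟨⟨E ∩ F, E.2.1.inter F.2.1, E.2.2, F.2.2⟩, inter_subset_left, inter_subset_right⟩)
    (fun E => E.2.1.isClosed.isCompact) fun y hy => hO.mem_nhds (hxO hy)
  exact ⟨E, hE, hxE, hEO⟩

theorem exists_isClosed_partition_of_disjoint_connectedComponentIn {D B : Set α}
    (hD : IsCompact D) (hB : IsClosed B) {x : α} (hx : x ∈ D)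
    (hxB : Disjoint (connectedComponentIn D x) B) :
    ∃ E F, IsClosed E ∧ IsClosed F ∧ Disjoint E F ∧ E ∪ F = D ∧ x ∈ E ∧ Disjoint E B := by
  have : CompactSpace D := isCompact_iff_compactSpace.1 hD
  rw [connectedComponentIn_eq_image hx, disjoint_left, forall_mem_image] at hxB
  obtain ⟨E, hE, hxE, hEB⟩ := exists_isClopen_of_connectedComponent_subset
    (hB.isOpen_compl.preimage (continuous_subtype_val (p := (· ∈ D)))) hxB
  have himage : ∀ {S : Set D}, IsClosed S → IsClosed ((↑) '' S : Set α) := fun hS =>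
    hD.isClosed.isClosedMap_subtype_val _ hS
  refine ⟨(↑) '' E, (↑) '' Eᶜ, himage hE.isClosed, himage hE.compl.isClosed,
    (disjoint_image_iff Subtype.val_injective).2 disjoint_compl_right, ?_, ⟨_, hxE, rfl⟩, ?_⟩
  · rw [← image_union, union_compl_self, image_univ, Subtype.range_coe]
  · rw [disjoint_left, forall_mem_image]
    exact hEB

theorem IsSubcontinuum.connectedComponentIn_closure_sdiff_inter_nonempty {N B : Set α}
    (hN : IsSubcontinuum N) (hB : IsClosed B) (hNB : (N ∩ B).Nonempty) {q : α}
    (hq : q ∈ closure (N \ B)) :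
    (connectedComponentIn (closure (N \ B)) q ∩ B).Nonempty := by
  by_contra hdisj
  have hDN : closure (N \ B) ⊆ N := closure_minimal sdiff_subset hN.isClosed
  obtain ⟨E, F, hE, hF, hEF, hEFD, hqE, hEB⟩ :=
    exists_isClosed_partition_of_disjoint_connectedComponentIn
      (hN.1.of_isClosed_subset isClosed_closure hDN) hB hq
      (disjoint_iff_inter_eq_empty.2 (not_nonempty_iff_eq_empty.1 hdisj))
  have hcover : N ⊆ E ∪ (F ∪ B) := fun y hy => by
    by_cases hyB : y ∈ B
    · exact Or.inr (Or.inr hyB)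
    · exact (hEFD ▸ subset_closure ⟨hy, hyB⟩ : y ∈ E ∪ F).imp_right Or.inl
  obtain ⟨y, -, hyE, hyF | hyB⟩ := isPreconnected_closed_iff.1 hN.2.isPreconnected E (F ∪ B) hE
    (hF.union hB) hcover ⟨q, hDN hq, hqE⟩ (hNB.mono (inter_subset_inter_right _ subset_union_right))
  · exact disjoint_left.1 hEF hyE hyF
  · exact disjoint_left.1 hEB hyE hyB

theorem exists_subset_of_sInter_subset_of_isChain {c : Set (Set α)} (hc : IsChain (· ⊆ ·) c)
    (hne : c.Nonempty) (hcpt : ∀ K ∈ c, IsCompact K) {O : Set α} (hO : IsOpen O)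
    (hcO : ⋂₀ c ⊆ O) : ∃ K ∈ c, K ⊆ O := by
  have : Nonempty c := hne.to_subtype
  obtain ⟨K, hK⟩ := exists_subset_nhds_of_isCompact (V := fun K : c => (K : Set α))
    (fun K L => (hc.total K.2 L.2).elim (fun h => ⟨K, Subset.rfl, h⟩) fun h => ⟨L, h, Subset.rfl⟩)
    (fun K => hcpt K K.2)
    fun y hy => hO.mem_nhds (hcO (by rwa [sInter_eq_iInter]))
  exact ⟨K, K.2, hK⟩

theorem isSubcontinuum_sInter_of_isChain {c : Set (Set α)} (hc : IsChain (· ⊆ ·) c)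
    (hne : c.Nonempty) (hcont : ∀ K ∈ c, IsSubcontinuum K) : IsSubcontinuum (⋂₀ c) := by
  have hcpt : ∀ K ∈ c, IsCompact K := fun K hK => (hcont K hK).1
  obtain ⟨K₀, hK₀⟩ := hne
  have hcompact : IsCompact (⋂₀ c) := (hcpt K₀ hK₀).of_isClosed_subset
    (isClosed_sInter fun K hK => (hcont K hK).isClosed) (sInter_subset_of_mem hK₀)
  refine ⟨hcompact, nonempty_iff_ne_empty.2 fun hempty => ?_, ?_⟩
  · obtain ⟨K, hK, hKe⟩ := exists_subset_of_sInter_subset_of_isChain hc ⟨K₀, hK₀⟩ hcpt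
      isOpen_empty hempty.subset
    exact (hcont K hK).2.nonempty.not_subset_empty hKe
  rw [isPreconnected_iff_subset_of_fully_disjoint_closed hcompact.isClosed]
  intro E F hE hF hcov hEF
  obtain ⟨O₁, O₂, hO₁, hO₂, hE₁, hF₂, hO⟩ := SeparatedNhds.of_isCompact_isCompact
    (hcompact.inter_right hE) (hcompact.inter_right hF)
    (hEF.mono inter_subset_right inter_subset_right)
  obtain ⟨K, hK, hKO⟩ := exists_subset_of_sInter_subset_of_isChain hc ⟨K₀, hK₀⟩ hcpt
    (hO₁.union hO₂)
    fun y hy => (hcov hy).imp (fun h => hE₁ ⟨hy, h⟩) fun h => hF₂ ⟨hy, h⟩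
  have hcK : ⋂₀ c ⊆ K := sInter_subset_of_mem hK
  rcases isPreconnected_iff_subset_of_disjoint.1 (hcont K hK).2.isPreconnected O₁ O₂ hO₁ hO₂ hKO
    (by rw [hO.inter_eq, inter_empty]) with h | h
  · exact Or.inl fun y hy => (hcov hy).resolve_right fun hyF =>
      disjoint_left.1 hO (h (hcK hy)) (hF₂ ⟨hy, hyF⟩)
  · exact Or.inr fun y hy => (hcov hy).resolve_left fun hyE =>
      disjoint_left.1 hO (hE₁ ⟨hy, hyE⟩) (h (hcK hy))

end Continua

section Joins

variable {α : Type*} [TopologicalSpace α]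

/-- `Joins P L K`: the set `K` is a subcontinuum meeting both `P` and `L`. The ends come first so
that `Minimal (Joins P L)` is irreducibility between them. -/
def Joins (P L K : Set α) : Prop :=
  IsSubcontinuum K ∧ (K ∩ P).Nonempty ∧ (K ∩ L).Nonempty

theorem Joins.symm {P L K : Set α} (h : Joins P L K) : Joins L P K :=
  ⟨h.1, h.2.2, h.2.1⟩

variable [T2Space α] {P L : Set α}

theorem joins_sInter_of_isChain (hP : IsClosed P) (hL : IsClosed L) {c : Set (Set α)}
    (hc : IsChain (· ⊆ ·) c) (hne : c.Nonempty) (hjoins : ∀ K ∈ c, Joins P L K) :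
    Joins P L (⋂₀ c) := by
  have hmeets : ∀ {S : Set α}, IsClosed S → (∀ K ∈ c, (K ∩ S).Nonempty) →
      (⋂₀ c ∩ S).Nonempty := fun {S} hS hcS => by
    by_contra hempty
    rw [← not_disjoint_iff_nonempty_inter, not_not, ← subset_compl_iff_disjoint_right] at hempty
    obtain ⟨K, hK, hKS⟩ := exists_subset_of_sInter_subset_of_isChain hc hne
      (fun K hK => (hjoins K hK).1.1) hS.isOpen_compl hempty
    obtain ⟨y, hyK, hyS⟩ := hcS K hK
    exact hKS hyK hyS
  exact ⟨isSubcontinuum_sInter_of_isChain hc hne fun K hK => (hjoins K hK).1,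
    hmeets hP fun K hK => (hjoins K hK).2.1, hmeets hL fun K hK => (hjoins K hK).2.2⟩

theorem Joins.exists_minimal_subset (hP : IsClosed P) (hL : IsClosed L) {M : Set α}
    (hM : Joins P L M) : ∃ N ⊆ M, Minimal (Joins P L) N :=
  zorn_superset_nonempty {K | Joins P L K} (fun c hcS hc hne =>
    ⟨⋂₀ c, joins_sInter_of_isChain hP hL hc hne hcS, fun _ => sInter_subset_of_mem⟩) M hM

theorem exists_union_eq_of_minimal_joins {N : Set α} (hN : Minimal (Joins P L) N)
    (hNind : ¬ IsIndecomposableSet N) :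
    ∃ A B, IsSubcontinuum A ∧ IsSubcontinuum B ∧ A ∪ B = N ∧ (A ∩ B).Nonempty ∧
      (A ∩ P).Nonempty ∧ Disjoint A L ∧ (B ∩ L).Nonempty ∧ Disjoint B P := by
  simp only [IsIndecomposableSet, not_forall, not_or] at hNind
  obtain ⟨A, B, hA, hAN, hB, hBN, hAB, hANne, hBNne⟩ := hNind
  have hABne : (A ∩ B).Nonempty := by
    obtain ⟨y, -, hy⟩ := isPreconnected_closed_iff.1 hN.prop.1.2.isPreconnected A B hA.isClosed
      hB.isClosed hAB.superset (hA.2.nonempty.mono (subset_inter hAN Subset.rfl))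
      (hB.2.nonempty.mono (subset_inter hBN Subset.rfl))
    exact ⟨y, hy⟩
  obtain ⟨p, hpN, hpP⟩ := hN.prop.2.1
  wlog hpA : p ∈ A generalizing A B
  · exact this B A hB hBN hA hAN (union_comm B A ▸ hAB) hBNne hANne (inter_comm A B ▸ hABne)
      ((hAB.superset hpN).resolve_left hpA)
  have hAP : (A ∩ P).Nonempty := ⟨p, hpA, hpP⟩
  have hAL : Disjoint A L := not_not.1 fun hAL =>
    hANne (hN.eq_of_le ⟨hA, hAP, not_disjoint_iff_nonempty_inter.1 hAL⟩ hAN)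
  have hBL : (B ∩ L).Nonempty := by
    obtain ⟨l, hlN, hlL⟩ := hN.prop.2.2
    exact ⟨l, (hAB.superset hlN).resolve_left fun hlA => disjoint_left.1 hAL hlA hlL, hlL⟩
  have hBP : Disjoint B P := not_not.1 fun hBP =>
    hBNne (hN.eq_of_le ⟨hB, not_disjoint_iff_nonempty_inter.1 hBP, hBL⟩ hBN)
  exact ⟨A, B, hA, hB, hAB, hABne, hAP, hAL, hBL, hBP⟩

end Joins

section Discoherence

variable {α : Type*} [TopologicalSpace α] {Y : Set α}

/-- Kuratowski's discoherence: no two proper closed pieces covering `Y` have a connected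
intersection, as for a circle. The empty intersection is included, so that closed discoherent sets
are connected. -/
def IsDiscoherent (Y : Set α) : Prop :=
  ∀ Y₁ Y₂, IsClosed Y₁ → IsClosed Y₂ → Y₁ ∪ Y₂ = Y → IsPreconnected (Y₁ ∩ Y₂) → Y₁ = Y ∨ Y₂ = Y

theorem IsDiscoherent.isPreconnected (hY : IsDiscoherent Y) (hYc : IsClosed Y) :
    IsPreconnected Y := by
  rw [isPreconnected_iff_subset_of_fully_disjoint_closed hYc]
  intro E F hE hF hcov hEF
  have hinter : Y ∩ E ∩ (Y ∩ F) = ∅ :=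
    (hEF.mono inter_subset_right inter_subset_right).inter_eq
  exact (hY (Y ∩ E) (Y ∩ F) (hYc.inter hE) (hYc.inter hF)
    (by rw [← inter_union_distrib_left, inter_eq_left.2 hcov])
    (hinter ▸ isPreconnected_empty)).imp inter_eq_left.1 inter_eq_left.1

theorem IsDiscoherent.mem_connectedComponentIn [T2Space α] (hY : IsDiscoherent Y) {D N : Set α}
    (hD : IsCompact D) (hN : IsClosed N) (hNpre : IsPreconnected N) (hDN : D ∪ N = Y)
    {p l : α} (hp : p ∈ Y \ N) (hl : l ∈ Y \ N) : l ∈ connectedComponentIn D p := by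
  by_contra hlC
  have hpD : p ∈ D := (hDN.superset hp.1).resolve_right hp.2
  obtain ⟨E, F, hE, hF, hEF, hEFD, hpE, hlE⟩ :=
    exists_isClosed_partition_of_disjoint_connectedComponentIn hD isClosed_singleton hpD
      (disjoint_singleton_right.2 hlC)
  have hinter : (E ∪ N) ∩ (F ∪ N) = N := by
    rw [← inter_union_distrib_right, hEF.inter_eq, empty_union]
  rcases hY (E ∪ N) (F ∪ N) (hE.union hN) (hF.union hN)
    (by rw [← union_union_distrib_right, hEFD, hDN]) (by rwa [hinter]) with h | h
  · exact (h.superset hl.1).elim (disjoint_singleton_right.1 hlE) hl.2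
  · exact (h.superset hp.1).elim (disjoint_left.1 hEF hpE) hp.2

end Discoherence

section Bottleneck

variable {α : Type*} [TopologicalSpace α] {Y G P L : Set α}

/-- The open set `G` is a bottleneck of `Y` between the subcontinua `P` and `L`: it meets `Y` but
neither `P` nor `L`, and every subcontinuum of `Y` that joins `P` and `L` contains all of `G ∩ Y`.
Such joining continua have interior in `Y`, which makes them the candidates for an indecomposable
subcontinuum. -/
structure IsBottleneck (Y G P L : Set α) : Prop where
  isOpen : IsOpen G
  nonempty : (G ∩ Y).Nonempty
  left : IsSubcontinuum P
  left_subset : P ⊆ Y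
  left_disjoint : Disjoint G P
  right : IsSubcontinuum L
  right_subset : L ⊆ Y
  right_disjoint : Disjoint G L
  subset : ∀ K ⊆ Y, Joins P L K → G ∩ Y ⊆ K

theorem IsBottleneck.symm (h : IsBottleneck Y G P L) : IsBottleneck Y G L P where
  isOpen := h.isOpen
  nonempty := h.nonempty
  left := h.right
  left_subset := h.right_subset
  left_disjoint := h.right_disjoint
  right := h.left
  right_subset := h.left_subset
  right_disjoint := h.left_disjoint
  subset K hKY hK := h.subset K hKY hK.symm

variable [T2Space α]

theorem IsBottleneck.expand_right (h : IsBottleneck Y G P L) {L' : Set α}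
    (hL' : IsSubcontinuum L') (hLL' : L ⊆ L') (hL'Y : L' ⊆ Y) (hne : ((G \ L') ∩ Y).Nonempty) :
    IsBottleneck Y (G \ L') P L' where
  isOpen := h.isOpen.sdiff hL'.isClosed
  nonempty := hne
  left := h.left
  left_subset := h.left_subset
  left_disjoint := h.left_disjoint.mono_left sdiff_subset
  right := hL'
  right_subset := hL'Y
  right_disjoint := disjoint_sdiff_left
  subset K hKY hK := by
    have hKL' : Joins P L (K ∪ L') :=
      ⟨hK.1.union hL' hK.2.2, hK.2.1.mono (inter_subset_inter_left _ subset_union_left),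
        h.right.2.nonempty.mono (subset_inter (hLL'.trans subset_union_right) Subset.rfl)⟩
    rintro y ⟨⟨hyG, hyL'⟩, hyY⟩
    exact (h.subset _ (union_subset hKY hL'Y) hKL' ⟨hyG, hyY⟩).resolve_right hyL'

theorem IsBottleneck.exists_maximal_left (h : IsBottleneck Y G P L) (hY : IsCompact Y) :
    ∃ P' ⊇ P, IsBottleneck Y G P' L ∧
      ∀ C ⊆ Y, IsPreconnected C → Disjoint G C → (C ∩ P').Nonempty → C ⊆ P' := by
  obtain ⟨p, hp⟩ := h.left.2.nonempty
  have hsub : ∀ {C : Set α}, C ⊆ Y → Disjoint G C → C ⊆ Y \ G := fun hCY hGC =>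
    subset_sdiff.2 ⟨hCY, hGC.symm⟩
  have hPD := hsub h.left_subset h.left_disjoint
  have hP'D := connectedComponentIn_subset (Y \ G) p
  have hPP' := h.left.2.isPreconnected.subset_connectedComponentIn hp hPD
  have hG : G \ connectedComponentIn (Y \ G) p = G :=
    (disjoint_sdiff_right.mono_right hP'D).sdiff_eq_left
  refine ⟨connectedComponentIn (Y \ G) p, hPP', ?_, fun C hCY hC hGC => ?_⟩
  · have hexpand := h.symm.expand_right
      (isSubcontinuum_connectedComponentIn (hY.diff h.isOpen) (hPD hp)) hPP'
      (hP'D.trans sdiff_subset) (by rw [hG]; exact h.nonempty)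
    rw [hG] at hexpand
    exact hexpand.symm
  · rintro ⟨c, hcC, hcP'⟩
    rw [connectedComponentIn_eq hcP']
    exact hC.subset_connectedComponentIn hcC (hsub hCY hGC)

theorem IsBottleneck.sdiff_union_inter_nonempty (h : IsBottleneck Y G P L)
    (hmax : ∀ C ⊆ Y, IsPreconnected C → Disjoint G C → (C ∩ P).Nonempty → C ⊆ P)
    {A B : Set α} (hAB : IsSubcontinuum (A ∪ B)) (hABY : A ∪ B ⊆ Y) (hB : IsSubcontinuum B)
    (hAP : (A ∩ P).Nonempty) (hBP : Disjoint B P) : ((G \ (L ∪ B)) ∩ Y).Nonempty := by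
  by_contra hempty
  have hGB : ∀ y ∈ G ∩ Y, y ∈ B := fun y hy => by
    by_contra hyB
    exact hempty ⟨y, ⟨hy.1, fun hyLB => hyLB.elim (disjoint_left.1 h.right_disjoint hy.1) hyB⟩,
      hy.2⟩
  obtain ⟨q, hqA, hqP⟩ := hAP
  have hq : q ∈ closure ((A ∪ B) \ B) :=
    subset_closure ⟨Or.inl hqA, fun hqB => disjoint_left.1 hBP hqB hqP⟩
  have hclosureG : Disjoint G (closure ((A ∪ B) \ B)) :=
    (disjoint_left.2 fun y hyG hy => hy.2 (hGB y ⟨hyG, hABY hy.1⟩)).closure_right h.isOpen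
  have hclosureY : closure ((A ∪ B) \ B) ⊆ Y :=
    (closure_minimal sdiff_subset hAB.isClosed).trans hABY
  have hCP := hmax _ ((connectedComponentIn_subset _ q).trans hclosureY)
    isPreconnected_connectedComponentIn (hclosureG.mono_right (connectedComponentIn_subset _ q))
    ⟨q, mem_connectedComponentIn hq, hqP⟩
  obtain ⟨b, hbC, hbB⟩ := hAB.connectedComponentIn_closure_sdiff_inter_nonempty hB.isClosed
    (hB.2.nonempty.mono (subset_inter subset_union_right Subset.rfl)) hq
  exact disjoint_left.1 hBP hbB (hCP hbC)

theorem IsBottleneck.exists_split (h : IsBottleneck Y G P L) (hY : IsCompact Y)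
    (hind : ∀ K ⊆ Y, IsSubcontinuum K → G ∩ Y ⊆ K → ¬ IsIndecomposableSet K)
    {M : Set α} (hMY : M ⊆ Y) (hM : Joins P L M) :
    ∃ G' ⊆ G, ∃ P' ⊇ P, ∃ L' ⊇ L, ∃ M' ⊆ M,
      IsBottleneck Y G' P' L' ∧ Joins P' L' M' ∧ Disjoint M' L := by
  obtain ⟨P', hPP', h', hmax⟩ := h.exists_maximal_left hY
  have hM' : Joins P' L M := ⟨hM.1, hM.2.1.mono (inter_subset_inter_right _ hPP'), hM.2.2⟩
  obtain ⟨N, hNM, hN⟩ := hM'.exists_minimal_subset h'.left.isClosed h'.right.isClosed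
  have hNY := hNM.trans hMY
  obtain ⟨A, B, hA, hB, rfl, hAB, ⟨q, hqA, hqP'⟩, hAL, hBL, hBP'⟩ :=
    exists_union_eq_of_minimal_joins hN (hind N hNY hN.prop.1 (h'.subset N hNY hN.prop))
  have hne := h'.sdiff_union_inter_nonempty hmax hN.prop.1 hNY hB ⟨q, hqA, hqP'⟩ hBP'
  refine ⟨G \ (L ∪ B), sdiff_subset, P', hPP', L ∪ B, subset_union_left, A,
    subset_union_left.trans hNM, ?_, ?_, hAL⟩
  · exact h'.expand_right (h.right.union hB (inter_comm B L ▸ hBL)) subset_union_left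
      (union_subset h.right_subset (subset_union_right.trans hNY)) hne
  · exact ⟨hA, ⟨q, hqA, hqP'⟩, hAB.mono (inter_subset_inter_right _ subset_union_right)⟩

theorem IsBottleneck.exists_isIndecomposableSet (h : IsBottleneck Y G P L) (hY : IsSubcontinuum Y)
    (hYdisc : IsDiscoherent Y) :
    ∃ K ⊆ Y, IsSubcontinuum K ∧ IsIndecomposableSet K ∧
      ∃ O ⊆ G, IsOpen O ∧ (O ∩ Y).Nonempty ∧ O ∩ Y ⊆ K := by
  by_contra! hind
  have hYPL : Joins P L Y := ⟨hY, h.left.2.nonempty.mono (subset_inter h.left_subset Subset.rfl),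
    h.right.2.nonempty.mono (subset_inter h.right_subset Subset.rfl)⟩
  obtain ⟨G₁, hG₁, P₁, hP₁, L₁, hL₁, M, hMY, h₁, hM, hML⟩ := h.exists_split hY.1
    (fun K hKY hK hGK hKind => hind K hKY hK hKind G Subset.rfl h.isOpen h.nonempty hGK)
    Subset.rfl hYPL
  obtain ⟨G₂, hG₂, L₂, hL₂, P₂, hP₂, N, hNM, h₂, hN, hNP⟩ := h₁.symm.exists_split hY.1
    (fun K hKY hK hGK hKind => hind K hKY hK hKind G₁ hG₁ h₁.isOpen h₁.nonempty hGK)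
    hMY hM.symm
  have hNY := hNM.trans hMY
  have hG₂N := h₂.subset N hNY hN
  obtain ⟨p, hp⟩ := h.left.2.nonempty
  obtain ⟨l, hl⟩ := h.right.2.nonempty
  have hcover : Y \ G₂ ∪ N = Y :=
    Subset.antisymm (union_subset sdiff_subset hNY) fun y hy =>
      (em (y ∈ G₂)).elim (fun hyG => Or.inr (hG₂N ⟨hyG, hy⟩)) fun hyG => Or.inl ⟨hy, hyG⟩
  have hpN : p ∉ N := fun hpN => disjoint_left.1 hNP hpN (hP₁ hp)
  have hlN : l ∉ N := fun hlN => disjoint_left.1 hML (hNM hlN) hl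
  have hlC := hYdisc.mem_connectedComponentIn (hY.1.diff h₂.isOpen) hN.1.isClosed
    hN.1.2.isPreconnected hcover ⟨h.left_subset hp, hpN⟩ ⟨h.right_subset hl, hlN⟩
  have hpD : p ∈ Y \ G₂ :=
    ⟨h.left_subset hp, fun hpG => disjoint_left.1 h.left_disjoint (hG₁ (hG₂ hpG)) hp⟩
  have hCD := connectedComponentIn_subset (Y \ G₂) p
  have hC : Joins L₂ P₂ (connectedComponentIn (Y \ G₂) p) :=
    ⟨isSubcontinuum_connectedComponentIn (hY.1.diff h₂.isOpen) hpD,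
      ⟨l, hlC, hL₂ (hL₁ hl)⟩, ⟨p, mem_connectedComponentIn hpD, hP₂ (hP₁ hp)⟩⟩
  obtain ⟨y, hy⟩ := h₂.nonempty
  exact (hCD (h₂.subset _ (hCD.trans sdiff_subset) hC hy)).2 hy.1

end Bottleneck

section Irreducible

variable {α : Type*} [TopologicalSpace α] {X Y A G : Set α}

/-- `X` is irreducible about `A`: no proper subcontinuum of `X` contains the subset `A` of `X`. -/
def IsIrreducibleAbout (X A : Set α) : Prop :=
  A ⊆ X ∧ ∀ K, IsSubcontinuum K → K ⊆ X → A ⊆ K → K = X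

theorem relInterior_nonempty_iff :
    (relInterior X Y).Nonempty ↔ ∃ O, IsOpen O ∧ (O ∩ X).Nonempty ∧ O ∩ X ⊆ Y := by
  constructor
  · rintro ⟨x, hx⟩
    obtain ⟨_, hsub, ⟨O, hO, rfl⟩, hxO⟩ := mem_interior.1 hx
    exact ⟨O, hO, ⟨x, hxO, x.2⟩, fun y hy => hsub (show (⟨y, hy.2⟩ : X) ∈ _ from hy.1)⟩
  · rintro ⟨O, hO, ⟨x, hxO, hxX⟩, hsub⟩
    exact ⟨⟨x, hxX⟩, mem_interior.2
      ⟨_, fun y hy => hsub ⟨hy, y.2⟩, hO.preimage continuous_subtype_val, hxO⟩⟩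

theorem nontrivial_inter_of_isPreconnected [T1Space α] (hX : IsPreconnected X)
    (hXnt : X.Nontrivial) {O : Set α} (hO : IsOpen O) (hne : (O ∩ X).Nonempty) :
    (O ∩ X).Nontrivial := by
  obtain ⟨x, hxO, hxX⟩ := hne
  obtain ⟨y, hy, hyx⟩ :=
    accPt_iff_nhds.1 (hX.preperfect_of_nontrivial hXnt x hxX) O (hO.mem_nhds hxO)
  exact ⟨y, hy, x, ⟨hxO, hxX⟩, hyx⟩

variable [T2Space α]

theorem IsSubcontinuum.exists_inter_subset_singleton (hX : IsSubcontinuum X) (hY : IsClosed Y)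
    (hYX : Y ⊆ X) (hYne : Y.Nonempty) (hG : IsOpen G) (hGX : G ∩ X ⊆ Y) {a : α} (ha : a ∈ X) :
    ∃ y ∈ Y, ∃ C ⊆ X, IsSubcontinuum C ∧ a ∈ C ∧ y ∈ C ∧ G ∩ C ⊆ {y} := by
  by_cases haY : a ∈ Y
  · exact ⟨a, haY, {a}, singleton_subset_iff.2 ha, isSubcontinuum_singleton a, rfl, rfl,
      inter_subset_right⟩
  have haD : a ∈ closure (X \ Y) := subset_closure ⟨ha, haY⟩
  have hDX : closure (X \ Y) ⊆ X := closure_minimal sdiff_subset hX.isClosed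
  have hGD : Disjoint G (closure (X \ Y)) :=
    (disjoint_left.2 fun y hyG hy => hy.2 (hGX ⟨hyG, hy.1⟩)).closure_right hG
  have hCD := connectedComponentIn_subset (closure (X \ Y)) a
  obtain ⟨y, hyC, hyY⟩ := hX.connectedComponentIn_closure_sdiff_inter_nonempty hY
    (hYne.mono (subset_inter hYX Subset.rfl)) haD
  exact ⟨y, hyY, _, hCD.trans hDX,
    isSubcontinuum_connectedComponentIn (hX.1.of_isClosed_subset isClosed_closure hDX) haD,
    mem_connectedComponentIn haD, hyC, (hGD.mono_right hCD).inter_eq.trans_subset (empty_subset _)⟩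

theorem IsIrreducibleAbout.exists_finite_subset (hXA : IsIrreducibleAbout X A) (hA : A.Finite)
    (hX : IsSubcontinuum X) (hY : IsClosed Y) (hYX : Y ⊆ X) (hYne : Y.Nonempty) (hG : IsOpen G)
    (hGX : G ∩ X ⊆ Y) :
    ∃ B ⊆ Y, B.Finite ∧ ∀ K ⊆ Y, IsSubcontinuum K → B ⊆ K → G ∩ Y ⊆ K := by
  choose! y hyY C hCX hC haC hyC hGC using fun a (ha : a ∈ A) =>
    hX.exists_inter_subset_singleton hY hYX hYne hG hGX (hXA.1 ha)
  refine ⟨y '' A, image_subset_iff.2 hyY, hA.image y, fun K hKY hK hBK => ?_⟩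
  have hyK : ∀ a ∈ A, y a ∈ K := fun a ha => hBK (mem_image_of_mem y ha)
  have hunion : K ∪ ⋃ a ∈ A, C a = X :=
    hXA.2 _ (hK.union_biUnion hA hC fun a ha => ⟨y a, hyK a ha, hyC a ha⟩)
      (union_subset (hKY.trans hYX) (iUnion₂_subset hCX))
      fun a ha => Or.inr (mem_iUnion₂.2 ⟨a, ha, haC a ha⟩)
  rintro z ⟨hzG, hzY⟩
  rcases hunion.superset (hYX hzY) with hzK | hzC
  · exact hzK
  · obtain ⟨a, ha, hza⟩ := mem_iUnion₂.1 hzC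
    exact hGC a ha ⟨hzG, hza⟩ ▸ hyK a ha

-- The right end is a subcontinuum not covering `G ∩ Y` that captures as much of `B` as possible;
-- the left end is a point of `B` it misses.
theorem exists_isBottleneck (hY : IsPreconnected Y) (hYnt : Y.Nontrivial) (hG : IsOpen G)
    (hGY : (G ∩ Y).Nonempty) {B : Set α} (hB : B.Finite) (hBY : B ⊆ Y)
    (hBG : ∀ K ⊆ Y, IsSubcontinuum K → B ⊆ K → G ∩ Y ⊆ K) :
    ∃ G' ⊆ G, ∃ P L, IsBottleneck Y G' P L := by
  have hGnt := nontrivial_inter_of_isPreconnected hY hYnt hG hGY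
  obtain ⟨x, hx⟩ := hYnt.nonempty
  have hsingle : {x} ∈ {L | L ⊆ Y ∧ IsSubcontinuum L ∧ ¬ G ∩ Y ⊆ L} :=
    ⟨singleton_subset_iff.2 hx, isSubcontinuum_singleton x,
      fun h => not_subsingleton_iff.2 hGnt (subsingleton_singleton.anti h)⟩
  obtain ⟨L, ⟨hLY, hL, hGL⟩, hmax⟩ := Finite.exists_maximalFor' (· ∩ B) _
    (hB.finite_subsets.subset (image_subset_iff.2 fun _ _ => inter_subset_right)) ⟨_, hsingle⟩
  obtain ⟨b, hbB, hbL⟩ := not_subset.1 fun hBL => hGL (hBG L hLY hL hBL)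
  obtain ⟨z, ⟨hzG, hzY⟩, hzL⟩ := not_subset.1 hGL
  obtain ⟨w, ⟨hwGL, hwY⟩, hwb⟩ := (nontrivial_inter_of_isPreconnected hY hYnt
    (hG.sdiff hL.isClosed) ⟨z, ⟨hzG, hzL⟩, hzY⟩).exists_ne b
  refine ⟨(G \ L) \ {b}, sdiff_subset.trans sdiff_subset, {b}, L,
    { isOpen := (hG.sdiff hL.isClosed).sdiff isClosed_singleton
      nonempty := ⟨w, ⟨hwGL, hwb⟩, hwY⟩
      left := isSubcontinuum_singleton b
      left_subset := singleton_subset_iff.2 (hBY hbB)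
      left_disjoint := disjoint_sdiff_left
      right := hL
      right_subset := hLY
      right_disjoint := disjoint_sdiff_left.mono_left sdiff_subset
      subset := ?_ }⟩
  rintro K hKY ⟨hK, ⟨_, hbK, rfl⟩, hKL⟩
  have hGKL : G ∩ Y ⊆ K ∪ L := by
    by_contra hGKL
    exact hbL (hmax ⟨union_subset hKY hLY, hK.union hL hKL, hGKL⟩
      (inter_subset_inter_left B subset_union_right) ⟨Or.inl hbK, hbB⟩).1
  rintro y ⟨⟨⟨hyG, hyL⟩, -⟩, hyY⟩
  exact (hGKL ⟨hyG, hyY⟩).resolve_right hyL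

theorem IsDiscoherent.exists_isIndecomposableSet_of_isIrreducibleAbout (hYdisc : IsDiscoherent Y)
    (hY : IsSubcontinuum Y) (hYX : Y ⊆ X) (hX : IsSubcontinuum X) (hXnt : X.Nontrivial)
    (hint : (relInterior X Y).Nonempty) (hA : A.Finite) (hXA : IsIrreducibleAbout X A) :
    ∃ K ⊆ Y, IsSubcontinuum K ∧ IsIndecomposableSet K ∧ (relInterior X K).Nonempty := by
  obtain ⟨G, hG, hGXne, hGX⟩ := relInterior_nonempty_iff.1 hint
  have hYnt : Y.Nontrivial :=
    (nontrivial_inter_of_isPreconnected hX.2.isPreconnected hXnt hG hGXne).mono hGX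
  obtain ⟨B, hBY, hB, hBG⟩ := hXA.exists_finite_subset hA hX hY.isClosed hYX hY.2.nonempty hG hGX
  obtain ⟨G', hG', P, L, hbottle⟩ := exists_isBottleneck hY.2.isPreconnected hYnt hG
    (hGXne.mono (subset_inter inter_subset_left hGX)) hB hBY hBG
  obtain ⟨K, hKY, hK, hKind, O, hOG', hO, ⟨o, hoO, hoY⟩, hOK⟩ :=
    hbottle.exists_isIndecomposableSet hY hYdisc
  exact ⟨K, hKY, hK, hKind, relInterior_nonempty_iff.2 ⟨O, hO, ⟨o, hoO, hYX hoY⟩,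
    fun y hy => hOK ⟨hy.1, hGX ⟨hG' (hOG' hy.1), hy.2⟩⟩⟩⟩

end Irreducible

section Logarithm

open Complex Metric

section General

variable {Z : Type*} [TopologicalSpace Z] {f g : Z → ℂ} {s t : Set Z}

/-- `f` has a continuous logarithm on `s`; in particular `f` has no zero there. On a compact plane
set, `z - w` failing this expresses that the set separates `w` from infinity. -/
def HasLogOn (f : Z → ℂ) (s : Set Z) : Prop :=
  ∃ h : Z → ℂ, ContinuousOn h s ∧ EqOn (exp ∘ h) f s

theorem HasLogOn.mono (hf : HasLogOn f t) (hst : s ⊆ t) : HasLogOn f s :=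
  let ⟨h, hh, hhf⟩ := hf
  ⟨h, hh.mono hst, hhf.mono hst⟩

theorem hasLogOn_const {c : ℂ} (hc : c ≠ 0) (s : Set Z) : HasLogOn (fun _ => c) s :=
  ⟨fun _ => log c, continuousOn_const, fun _ _ => exp_log hc⟩

theorem HasLogOn.of_norm_sub_lt (hf : HasLogOn f s) (hg : ContinuousOn g s)
    (hfg : ∀ z ∈ s, ‖g z - f z‖ < ‖f z‖) : HasLogOn g s := by
  obtain ⟨h, hh, hhf⟩ := hf
  have hf0 : ∀ z ∈ s, f z ≠ 0 := fun z hz => hhf hz ▸ exp_ne_zero (h z)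
  have hfc : ContinuousOn f s := hh.cexp.congr fun z hz => (hhf hz).symm
  have hslit : ∀ z ∈ s, 1 + (g z - f z) / f z ∈ slitPlane := fun z hz => by
    apply mem_slitPlane_of_norm_lt_one
    rw [norm_div, div_lt_one (norm_pos_iff.2 (hf0 z hz))]
    exact hfg z hz
  refine ⟨fun z => h z + log (1 + (g z - f z) / f z),
    hh.add ((continuousOn_const.add ((hg.sub hfc).div hfc hf0)).clog hslit), fun z hz => ?_⟩
  have hexp : exp (h z) = f z := hhf hz
  rw [Function.comp_apply, exp_add, exp_log (slitPlane_ne_zero (hslit z hz)), hexp, mul_add,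
    mul_one, mul_div_cancel₀ _ (hf0 z hz), add_sub_cancel]

theorem exists_eqOn_add_const_of_eqOn_exp (hs : IsPreconnected s) (hf : ContinuousOn f s)
    (hg : ContinuousOn g s) (hfg : EqOn (exp ∘ f) (exp ∘ g) s) :
    ∃ c, exp c = 1 ∧ EqOn f (fun z => g z + c) s := by
  rcases s.eq_empty_or_nonempty with rfl | ⟨a, ha⟩
  · exact ⟨0, exp_zero, eqOn_empty _ _⟩
  have hc : exp (f a - g a) = 1 := by
    rw [exp_sub, div_eq_one_iff_eq (exp_ne_zero _)]
    exact hfg ha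
  refine ⟨f a - g a, hc, isCoveringMap_exp.eqOn_of_comp_eqOn hs hf (hg.add continuousOn_const)
    (fun z hz => Subtype.ext ?_) ha (add_sub_cancel (g a) (f a)).symm⟩
  have hexp : exp (g z + (f a - g a)) = exp (g z) := by rw [exp_add, hc, mul_one]
  exact (hfg hz).trans hexp.symm

theorem HasLogOn.union (hs : IsClosed s) (ht : IsClosed t) (hst : IsPreconnected (s ∩ t))
    (hfs : HasLogOn f s) (hft : HasLogOn f t) : HasLogOn f (s ∪ t) := by
  classical
  obtain ⟨h, hh, hhf⟩ := hfs
  obtain ⟨k, hk, hkf⟩ := hft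
  obtain ⟨c, hc, hhk⟩ := exists_eqOn_add_const_of_eqOn_exp hst (hh.mono inter_subset_left)
    (hk.mono inter_subset_right) ((hhf.mono inter_subset_left).trans
      (hkf.mono inter_subset_right).symm)
  have hs_eq : EqOn (s.piecewise h fun z => k z + c) h s := piecewise_eqOn s _ _
  have ht_eq : EqOn (s.piecewise h fun z => k z + c) (fun z => k z + c) t := fun z hz => by
    by_cases hzs : z ∈ s
    · exact (hs_eq hzs).trans (hhk ⟨hzs, hz⟩)
    · exact piecewise_eq_of_notMem s _ _ hzs
  refine ⟨_, (hh.congr hs_eq).union_of_isClosed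
    ((hk.add continuousOn_const).congr ht_eq) hs ht, ?_⟩
  rintro z (hz | hz)
  · rw [Function.comp_apply, hs_eq hz]
    exact hhf hz
  · rw [Function.comp_apply, ht_eq hz, exp_add, hc, mul_one]
    exact hkf hz

end General

theorem hasLogOn_univ_of_continuous {f : ℂ → ℂ} (hf : Continuous f) (hf0 : ∀ z, f z ≠ 0) :
    HasLogOn f univ := by
  have hcontractible : ContractibleSpace (univ : Set ℂ) :=
    (convex_univ (𝕜 := ℝ)).contractibleSpace univ_nonempty
  have hsc : IsSimplyConnected (univ : Set ℂ) :=
    show SimplyConnectedSpace (univ : Set ℂ) from inferInstance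
  exact exists_continuousOn_eqOn_exp_comp hsc isOpen_univ hf.continuousOn
    fun ⟨z, _, hz⟩ => hf0 z hz

theorem not_hasLogOn_sub_const_sphere (u : ℂ) {R : ℝ} (hR : 0 < R) :
    ¬ HasLogOn (fun z => z - u) (sphere u R) := by
  rintro ⟨h, hh, hhe⟩
  have hexp : ∀ t, exp (h (circleMap u R t)) = circleMap 0 R t := fun t => by
    rw [← circleMap_sub_center u R t]
    exact hhe (circleMap_mem_sphere u hR.le t)
  have hlift : ContinuousOn (fun t => h (circleMap u R t)) univ :=
    hh.comp (continuous_circleMap u R).continuousOn fun t _ => circleMap_mem_sphere u hR.le t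
  obtain ⟨c, -, hc⟩ := exists_eqOn_add_const_of_eqOn_exp (g := fun t : ℝ => log R + t * I)
    isPreconnected_univ hlift (by fun_prop) fun t _ => by
      rw [Function.comp_apply, Function.comp_apply, hexp, exp_add,
        exp_log (ofReal_ne_zero.2 hR.ne'), circleMap_zero]
  have h0 := hc (mem_univ 0)
  have h2π := hc (mem_univ (0 + 2 * Real.pi))
  simp only [periodic_circleMap u R 0] at h2π
  simp [h0] at h2π

theorem not_hasLogOn_sub_const_frontier {A : Set ℂ} (hA : Bornology.IsBounded A)
    {u : ℂ} (hu : u ∈ A) :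
    ¬ HasLogOn (fun z => z - u) (frontier A) := by
  classical
  rintro ⟨h, hh, hhe⟩
  obtain ⟨g, hg⟩ := ContinuousMap.exists_restrict_eq (isClosed_frontier (s := A))
    ⟨(frontier A).domRestrict h, continuousOn_iff_continuous_domRestrict.1 hh⟩
  have hgh : ∀ z ∈ frontier A, g z = h z := fun z hz => congrArg (fun F => F ⟨z, hz⟩) hg
  have hcont : Continuous (A.piecewise (exp ∘ g) fun z => z - u) :=
    Continuous.piecewise (fun z hz => by rw [Function.comp_apply, hgh z hz]; exact hhe hz)
      (by fun_prop) (by fun_prop)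
  have hne : ∀ z, A.piecewise (exp ∘ g) (fun z => z - u) z ≠ 0 := fun z => by
    by_cases hz : z ∈ A
    · rw [piecewise_eq_of_mem A _ _ hz]
      exact exp_ne_zero _
    · rw [piecewise_eq_of_notMem A _ _ hz, sub_ne_zero]
      exact fun hzu => hz (hzu ▸ hu)
  obtain ⟨R, hR, hAR⟩ := hA.subset_ball_lt 0 u
  obtain ⟨H, hH, hHe⟩ := hasLogOn_univ_of_continuous hcont hne
  refine not_hasLogOn_sub_const_sphere u hR ⟨H, hH.mono (subset_univ _), fun z hz => ?_⟩
  rw [hHe (mem_univ z), piecewise_eq_of_notMem A _ _ fun hzA =>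
    (mem_ball.1 (hAR hzA)).ne (mem_sphere.1 hz)]

theorem eventually_hasLogOn_sub_const_iff {K : Set ℂ} (hK : IsClosed K) {w : ℂ} (hw : w ∉ K) :
    ∀ᶠ w' in 𝓝 w, (HasLogOn (fun z => z - w') K ↔ HasLogOn (fun z => z - w) K) := by
  obtain ⟨ε, hε, hεK⟩ := Metric.isOpen_iff.1 hK.isOpen_compl w hw
  have hnear : ∀ z ∈ K, ε ≤ ‖z - w‖ := fun z hz => by
    by_contra! hlt
    exact hεK (mem_ball_iff_norm.2 hlt) hz
  filter_upwards [ball_mem_nhds w (half_pos hε)] with w' hw'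
  rw [mem_ball_iff_norm] at hw'
  constructor <;> refine fun hlog => hlog.of_norm_sub_lt (by fun_prop) fun z hz => ?_
  · rw [sub_sub_sub_cancel_left]
    linarith [hnear z hz, norm_sub_le_norm_sub_add_norm_sub z w' w]
  · rw [sub_sub_sub_cancel_left, norm_sub_rev]
    linarith [hnear z hz]

theorem eventually_cobounded_hasLogOn_sub_const {K : Set ℂ} (hK : Bornology.IsBounded K) :
    ∀ᶠ w in Bornology.cobounded ℂ, HasLogOn (fun z => z - w) K := by
  obtain ⟨R, hR, hKR⟩ := hK.subset_ball_lt 0 0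
  filter_upwards [eventually_cobounded_le_norm R] with w hw
  refine (hasLogOn_const (neg_ne_zero.2 (norm_pos_iff.1 (hR.trans_le hw))) K).of_norm_sub_lt
    (by fun_prop) fun z hz => ?_
  rw [sub_neg_eq_add, sub_add_cancel, norm_neg]
  exact (mem_ball_zero_iff.1 (hKR hz)).trans_le hw

end Logarithm

section Components

variable {α : Type*} [TopologicalSpace α]

theorem frontier_connectedComponentIn_subset [LocallyConnectedSpace α] {O : Set α}
    (hO : IsOpen O) (x : α) : frontier (connectedComponentIn O x) ⊆ Oᶜ := fun y hy hyO => by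
  rw [hO.connectedComponentIn.frontier_eq] at hy
  exact hy.2 (closure_connectedComponentIn_inter_subset O x ⟨hy.1, hyO⟩)

theorem disjoint_frontier_of_isOpen {U : Set α} (hU : IsOpen U) : Disjoint U (frontier U) :=
  hU.frontier_eq ▸ disjoint_sdiff_right

theorem connectedComponentIn_compl_frontier {U : Set α} (hU : IsOpen U)
    (hUpre : IsPreconnected U) {u : α} (hu : u ∈ U) : connectedComponentIn (frontier U)ᶜ u = U := by
  have hUfr : U ⊆ (frontier U)ᶜ :=
    subset_compl_iff_disjoint_right.2 (disjoint_frontier_of_isOpen hU)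
  refine Subset.antisymm ?_ (hUpre.subset_connectedComponentIn hu hUfr)
  refine isPreconnected_connectedComponentIn.subset_of_closure_inter_subset hU
    ⟨u, mem_connectedComponentIn (hUfr hu), hu⟩ ?_
  rintro y ⟨hyU, hyC⟩
  by_contra hy
  exact connectedComponentIn_subset _ _ hyC (hU.frontier_eq ▸ ⟨hyU, hy⟩)

theorem disjoint_connectedComponentIn_compl_frontier {U : Set α} (hU : IsOpen U)
    (hUpre : IsPreconnected U) {x : α} (hne : connectedComponentIn (frontier U)ᶜ x ≠ U) :
    Disjoint U (connectedComponentIn (frontier U)ᶜ x) :=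
  disjoint_left.2 fun _ hu hux =>
    hne ((connectedComponentIn_eq hux).trans (connectedComponentIn_compl_frontier hU hUpre hu))

theorem union_connectedComponentIn_compl_eq_univ [LocallyConnectedSpace α] [PreconnectedSpace α]
    {F₁ F₂ : Set α} (h₁ : IsClosed F₁) (h₂ : IsClosed F₂) {u : α} (hu : u ∈ F₁ᶜ)
    (hF₂ : F₂ ⊆ connectedComponentIn F₁ᶜ u) (hF₁ : F₁ ⊆ connectedComponentIn F₂ᶜ u) :
    connectedComponentIn F₁ᶜ u ∪ connectedComponentIn F₂ᶜ u = univ := by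
  have hfr₁ := frontier_connectedComponentIn_subset h₁.isOpen_compl u
  have hfr₂ := frontier_connectedComponentIn_subset h₂.isOpen_compl u
  have hO₁ : IsOpen (connectedComponentIn F₁ᶜ u) := h₁.isOpen_compl.connectedComponentIn
  have hO₂ : IsOpen (connectedComponentIn F₂ᶜ u) := h₂.isOpen_compl.connectedComponentIn
  rw [compl_compl] at hfr₁ hfr₂
  refine IsClopen.eq_univ ⟨?_, hO₁.union hO₂⟩ ⟨u, Or.inl (mem_connectedComponentIn hu)⟩
  rw [← closure_subset_iff_isClosed, closure_union, closure_eq_self_union_frontier,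
    closure_eq_self_union_frontier]
  exact union_subset (union_subset subset_union_left (hfr₁.trans (hF₁.trans subset_union_right)))
    (union_subset subset_union_right (hfr₂.trans (hF₂.trans subset_union_left)))

theorem union_subset_connectedComponentIn_compl {U F : Set α} (hU : IsPreconnected U) {u : α}
    (hu : u ∈ U) {S : Set α} (hS : S ⊆ closure U) (hUF : Disjoint U F) (hSF : Disjoint S F) :
    U ∪ S ⊆ connectedComponentIn Fᶜ u :=
  (hU.subset_closure subset_union_left
    (union_subset subset_closure hS)).subset_connectedComponentIn (Or.inl hu)
    (subset_compl_iff_disjoint_right.2 (hUF.union_left hSF))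

theorem mem_connectedComponentIn_compl_image_iff {β : Type*} [TopologicalSpace β] (σ : α ≃ₜ β)
    {F : Set α} {x y : α} :
    σ y ∈ connectedComponentIn (σ '' F)ᶜ (σ x) ↔ y ∈ connectedComponentIn Fᶜ x := by
  rw [← image_compl_eq σ.bijective]
  by_cases hx : x ∈ Fᶜ
  · rw [← σ.image_connectedComponentIn hx, σ.injective.mem_set_image]
  · rw [connectedComponentIn_eq_empty hx, connectedComponentIn_eq_empty
      (mt σ.injective.mem_set_image.1 hx), mem_empty_iff_false, mem_empty_iff_false]

end Components

section Sphere

open OnePoint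

theorem exists_homeomorph_eq_infty (v : OnePoint ℂ) :
    ∃ σ : OnePoint ℂ ≃ₜ OnePoint ℂ, σ v = ∞ := by
  let e : OnePoint ℂ ≃ₜ Metric.sphere (0 : EuclideanSpace ℝ (Fin 3)) 1 :=
    onePointEquivSphereOfFinrankEq (by simp)
  have hnorm : ‖(e v : EuclideanSpace ℝ (Fin 3))‖ = 1 := mem_sphere_zero_iff_norm.1 (e v).2
  have hne : (e v : EuclideanSpace ℝ (Fin 3)) ≠ 0 := norm_ne_zero_iff.1 (by simp [hnorm])
  have : Fact (Module.finrank ℝ (EuclideanSpace ℝ (Fin 3)) = 2 + 1) := ⟨by simp⟩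
  have hfinrank : Module.finrank ℝ ℂ =
      Module.finrank ℝ (Submodule.span ℝ {(e v : EuclideanSpace ℝ (Fin 3))})ᗮ := by
    rw [Submodule.finrank_orthogonal_span_singleton (n := 2) hne, Complex.finrank_real_complex]
  let k := (FiniteDimensional.nonempty_continuousLinearEquiv_of_finrank_eq
    hfinrank).some.toHomeomorph
  let s := onePointHyperplaneHomeoUnitSphere hnorm
  have hs : s ∞ = e v := Subtype.ext <| by
    simp [s, onePointHyperplaneHomeoUnitSphere, equivOfIsEmbeddingOfRangeEq_apply_infty]
  refine ⟨((k.onePointCongr.trans s).trans e.symm).symm, (Homeomorph.symm_apply_eq _).2 ?_⟩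
  change v = e.symm (s ∞)
  rw [hs, e.symm_apply_apply]

instance : LocallyConnectedSpace (OnePoint ℂ) := by
  let e : OnePoint ℂ ≃ₜ Metric.sphere (0 : EuclideanSpace ℝ (Fin 3)) 1 :=
    onePointEquivSphereOfFinrankEq (by simp)
  have : Fact (Module.finrank ℝ (EuclideanSpace ℝ (Fin 3)) = 2 + 1) := ⟨by simp⟩
  have := ChartedSpace.locallyConnectedSpace (EuclideanSpace ℝ (Fin 2))
    (Metric.sphere (0 : EuclideanSpace ℝ (Fin 3)) 1)
  exact e.isOpenEmbedding.locallyConnectedSpace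

theorem hasLogOn_sub_const_of_infty_mem_connectedComponentIn {F : Set (OnePoint ℂ)}
    (hF : IsClosed F) {w : ℂ} (hw : ∞ ∈ connectedComponentIn Fᶜ (w : OnePoint ℂ)) :
    HasLogOn (fun z => z - w) ((↑) ⁻¹' F) := by
  have hCF := connectedComponentIn_subset Fᶜ (w : OnePoint ℂ)
  have hwF : (w : OnePoint ℂ) ∈ Fᶜ := connectedComponentIn_nonempty_iff.1 ⟨∞, hw⟩
  obtain ⟨hK, hKc⟩ := (isClosed_iff_of_notMem (hCF hw)).1 hF
  set K : Set ℂ := (↑) ⁻¹' F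
  set T : Set ℂ := {w | w ∉ K ∧ HasLogOn (fun z => z - w) K}
  have hT : IsOpen T := isOpen_iff_eventually.2 fun w hw =>
    (hK.isOpen_compl.eventually_mem hw.1).and
      ((eventually_hasLogOn_sub_const_iff hK hw.1).mono fun _ h => h.2 hw.2)
  have hnolog : IsOpen {w | w ∉ K ∧ ¬ HasLogOn (fun z => z - w) K} :=
    isOpen_iff_eventually.2 fun w hw => (hK.isOpen_compl.eventually_mem hw.1).and
      ((eventually_hasLogOn_sub_const_iff hK hw.1).mono fun _ h => h.not.2 hw.2)
  have hTc : IsCompact Tᶜ := by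
    refine Metric.isCompact_of_isClosed_isBounded hT.isClosed_compl ?_
    rw [Bornology.isBounded_def, compl_compl]
    exact Filter.inter_mem (Bornology.isBounded_def.1 hKc.isBounded)
      (eventually_cobounded_hasLogOn_sub_const hKc.isBounded)
  have hdisj : {w | w ∉ K ∧ ¬ HasLogOn (fun z => z - w) K} ⊆ Tᶜ := fun w hw hwT => hw.2 hwT.2
  have hwT := isPreconnected_connectedComponentIn.subset_left_of_subset_union
    (isOpen_compl_image_coe.2 ⟨hT.isClosed_compl, hTc⟩) (isOpen_image_coe.2 hnolog)
    (disjoint_compl_left.mono_right (image_mono hdisj))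
    (fun x hx => or_iff_not_imp_left.2 fun hxT => by
      obtain ⟨w, hw, rfl⟩ := not_notMem.1 hxT
      exact ⟨w, ⟨hCF hx, fun hlog => hw ⟨hCF hx, hlog⟩⟩, rfl⟩)
    ⟨∞, hw, infty_notMem_image_coe⟩ (mem_connectedComponentIn hwF)
  by_contra hlog
  exact hwT ⟨w, fun hw => hlog hw.2, rfl⟩

theorem not_hasLogOn_sub_const_preimage_frontier {D : Set (OnePoint ℂ)} (hD : ∞ ∉ closure D)
    {u : ℂ} (hu : ↑u ∈ D) : ¬ HasLogOn (fun z => z - u) ((↑) ⁻¹' frontier D) := by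
  rw [isOpenMap_coe.preimage_frontier_eq_frontier_preimage continuous_coe]
  exact not_hasLogOn_sub_const_frontier
    (((isClosed_iff_of_notMem hD).1 isClosed_closure).2.isBounded.subset
      (preimage_mono subset_closure)) hu

theorem isPreconnected_preimage_coe {s : Set (OnePoint ℂ)} (hs : IsPreconnected s)
    (hi : ∞ ∉ s) : IsPreconnected ((↑) ⁻¹' s : Set ℂ) :=
  hs.preimage_of_isOpenMap coe_injective isOpenMap_coe
    (by rwa [← compl_infty, subset_compl_singleton_iff])

theorem infty_mem_connectedComponentIn_compl_union {F₁ F₂ : Set (OnePoint ℂ)}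
    (h₁ : IsClosed F₁) (h₂ : IsClosed F₂) (hF : IsPreconnected (F₁ ∩ F₂)) {u : ℂ}
    (hu₁ : ∞ ∈ connectedComponentIn F₁ᶜ (u : OnePoint ℂ))
    (hu₂ : ∞ ∈ connectedComponentIn F₂ᶜ (u : OnePoint ℂ)) :
    ∞ ∈ connectedComponentIn (F₁ ∪ F₂)ᶜ (u : OnePoint ℂ) := by
  by_contra hi
  have hO : IsOpen (F₁ ∪ F₂)ᶜ := (h₁.union h₂).isOpen_compl
  have hi₁ : ∞ ∉ F₁ := connectedComponentIn_subset _ _ hu₁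
  have hi₂ : ∞ ∉ F₂ := connectedComponentIn_subset _ _ hu₂
  have hu : (u : OnePoint ℂ) ∈ (F₁ ∪ F₂)ᶜ := by
    rw [compl_union]
    exact ⟨connectedComponentIn_nonempty_iff.1 ⟨_, hu₁⟩,
      connectedComponentIn_nonempty_iff.1 ⟨_, hu₂⟩⟩
  have hfr := frontier_connectedComponentIn_subset hO (u : OnePoint ℂ)
  rw [compl_compl] at hfr
  have hclosure : ∞ ∉ closure (connectedComponentIn (F₁ ∪ F₂)ᶜ (u : OnePoint ℂ)) := fun h =>
    (hfr (hO.connectedComponentIn.frontier_eq ▸ ⟨h, hi⟩)).elim hi₁ hi₂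
  have hlog := (hasLogOn_sub_const_of_infty_mem_connectedComponentIn h₁ hu₁).union
    (h₁.preimage continuous_coe) (h₂.preimage continuous_coe)
    (isPreconnected_preimage_coe hF fun h => hi₁ h.1)
    (hasLogOn_sub_const_of_infty_mem_connectedComponentIn h₂ hu₂)
  exact not_hasLogOn_sub_const_preimage_frontier hclosure (mem_connectedComponentIn hu)
    (hlog.mono (preimage_mono hfr))

theorem janiszewski {F₁ F₂ : Set (OnePoint ℂ)} (h₁ : IsClosed F₁) (h₂ : IsClosed F₂)
    (hF : IsPreconnected (F₁ ∩ F₂)) {u v : OnePoint ℂ} (hv₁ : v ∈ connectedComponentIn F₁ᶜ u)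
    (hv₂ : v ∈ connectedComponentIn F₂ᶜ u) : v ∈ connectedComponentIn (F₁ ∪ F₂)ᶜ u := by
  rcases eq_or_ne u v with rfl | huv
  · refine mem_connectedComponentIn ?_
    rw [compl_union]
    exact ⟨connectedComponentIn_subset _ _ hv₁, connectedComponentIn_subset _ _ hv₂⟩
  obtain ⟨σ, hσ⟩ := exists_homeomorph_eq_infty v
  obtain ⟨w, hw⟩ := ne_infty_iff_exists.1 (hσ ▸ σ.injective.ne huv : σ u ≠ ∞)
  rw [← mem_connectedComponentIn_compl_image_iff σ, hσ, ← hw] at hv₁ hv₂ ⊢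
  rw [image_union]
  refine infty_mem_connectedComponentIn_compl_union (σ.isClosedMap _ h₁) (σ.isClosedMap _ h₂)
    ?_ hv₁ hv₂
  rw [← image_inter σ.injective]
  exact hF.image σ σ.continuous.continuousOn

theorem infty_mem_connectedComponentIn_compl_of_isSimplyConnected {U : Set (OnePoint ℂ)}
    (hU : IsOpen U) (hUsc : IsSimplyConnected U) (hi : ∞ ∉ U) {g : ℂ} (hg : ↑g ∉ U) :
    ∞ ∈ connectedComponentIn Uᶜ (g : OnePoint ℂ) := by
  by_contra hgC
  obtain ⟨E, F, hE, hF, hEF, hEFU, hgE, hiE⟩ :=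
    exists_isClosed_partition_of_disjoint_connectedComponentIn hU.isClosed_compl.isCompact
      isClosed_singleton hg (disjoint_singleton_right.2 hgC)
  have hiF : ∞ ∈ F := (hEFU.superset hi).resolve_left (disjoint_singleton_right.1 hiE)
  obtain ⟨D, D', hD, hD', hED, hFD', hDD'⟩ := normal_separation hE hF hEF
  have hclosure := hDD'.closure_left hD'
  have hfr : frontier D ⊆ U := fun x hx => by
    by_contra hxU
    rcases hEFU.superset hxU with hxE | hxF
    · exact disjoint_left.1 (disjoint_frontier_of_isOpen hD) (hED hxE) hx
    · exact disjoint_left.1 hclosure hx.1 (hFD' hxF)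
  have himage : ((↑) : ℂ → OnePoint ℂ) '' ((↑) ⁻¹' U) = U :=
    image_preimage_eq_of_subset (by rwa [← compl_infty, subset_compl_singleton_iff])
  have hUsc' : IsSimplyConnected ((↑) ⁻¹' U : Set ℂ) :=
    isOpenEmbedding_coe.isEmbedding.isSimplyConnected_image.1 (himage.symm ▸ hUsc)
  have hlog : HasLogOn (fun z => z - g) ((↑) ⁻¹' U) :=
    Complex.exists_continuousOn_eqOn_exp_comp hUsc' (hU.preimage continuous_coe) (by fun_prop)
      fun ⟨z, hz, hzg⟩ => hg (sub_eq_zero.1 hzg ▸ hz)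
  exact not_hasLogOn_sub_const_preimage_frontier
    (fun h => disjoint_left.1 hclosure h (hFD' hiF)) (hED hgE) (hlog.mono (preimage_mono hfr))

theorem isPreconnected_compl_of_isSimplyConnected {U : Set (OnePoint ℂ)} (hU : IsOpen U)
    (hUsc : IsSimplyConnected U) : IsPreconnected Uᶜ := by
  refine isPreconnected_of_forall_pair fun x hx y hy => ?_
  refine ⟨connectedComponentIn Uᶜ x, connectedComponentIn_subset _ _, mem_connectedComponentIn hx,
    ?_, isPreconnected_connectedComponentIn⟩
  rcases eq_or_ne x y with rfl | hxy
  · exact mem_connectedComponentIn hx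
  obtain ⟨σ, hσ⟩ := exists_homeomorph_eq_infty y
  obtain ⟨g, hg⟩ := ne_infty_iff_exists.1 (hσ ▸ σ.injective.ne hxy : σ x ≠ ∞)
  rw [← mem_connectedComponentIn_compl_image_iff σ, hσ, ← hg]
  refine infty_mem_connectedComponentIn_compl_of_isSimplyConnected (σ.isOpenMap _ hU)
    (σ.isEmbedding.isSimplyConnected_image.2 hUsc) ?_ ?_
  · rwa [← hσ, σ.injective.mem_set_image]
  · rwa [hg, σ.injective.mem_set_image]

theorem isPreconnected_frontier_of_isPreconnected_compl {U : Set (OnePoint ℂ)} (hU : IsOpen U)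
    (hUpre : IsPreconnected U) (hUc : IsPreconnected Uᶜ) : IsPreconnected (frontier U) := by
  rcases U.eq_empty_or_nonempty with rfl | ⟨u, hu⟩
  · rw [frontier_empty]
    exact isPreconnected_empty
  rw [isPreconnected_iff_subset_of_fully_disjoint_closed isClosed_frontier]
  intro F₁ F₂ h₁ h₂ hcover hdisj
  by_contra! hne
  obtain ⟨⟨y₂, hy₂, hy₂F₁⟩, y₁, hy₁, hy₁F₂⟩ := hne.imp not_subset.1 not_subset.1
  have hUfr := disjoint_frontier_of_isOpen hU
  set E₁ := F₁ ∩ frontier U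
  set E₂ := F₂ ∩ frontier U
  have hE₁ : IsClosed E₁ := h₁.inter isClosed_frontier
  have hE₂ : IsClosed E₂ := h₂.inter isClosed_frontier
  have hE : Disjoint E₁ E₂ := hdisj.mono inter_subset_left inter_subset_left
  have hEU : E₁ ∪ E₂ = frontier U := by
    rw [← union_inter_distrib_right, inter_eq_right.2 hcover]
  have hD₁ := union_subset_connectedComponentIn_compl hUpre hu
    (inter_subset_right.trans frontier_subset_closure : E₂ ⊆ closure U)
    (hUfr.mono_right inter_subset_right) hE.symm
  have hD₂ := union_subset_connectedComponentIn_compl hUpre hu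
    (inter_subset_right.trans frontier_subset_closure : E₁ ⊆ closure U)
    (hUfr.mono_right inter_subset_right) hE
  have huniv := union_connectedComponentIn_compl_eq_univ hE₁ hE₂
    (connectedComponentIn_nonempty_iff.1 ⟨u, hD₁ (Or.inl hu)⟩)
    (subset_union_right.trans hD₁) (subset_union_right.trans hD₂)
  obtain ⟨z, hzU, hz₁, hz₂⟩ := hUc _ _ hE₁.isOpen_compl.connectedComponentIn
    hE₂.isOpen_compl.connectedComponentIn (huniv.symm ▸ subset_univ _)
    ⟨y₂, fun h => disjoint_left.1 hUfr h hy₂,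
      hD₁ (Or.inr ⟨(hcover hy₂).resolve_left hy₂F₁, hy₂⟩)⟩
    ⟨y₁, fun h => disjoint_left.1 hUfr h hy₁,
      hD₂ (Or.inr ⟨(hcover hy₁).resolve_right hy₁F₂, hy₁⟩)⟩
  have hz := janiszewski hE₁ hE₂ (hE.inter_eq ▸ isPreconnected_empty) hz₁ hz₂
  rw [hEU, connectedComponentIn_compl_frontier hU hUpre hu] at hz
  exact hzU hz

theorem isDiscoherent_frontier {U V : Set (OnePoint ℂ)} (hU : IsOpen U) (hUc : IsConnected U)
    (hV : IsOpen V) (hVc : IsConnected V) (hUV : Disjoint U V) (hfr : frontier V ⊆ frontier U) :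
    IsDiscoherent (frontier V) := by
  obtain ⟨u, hu⟩ := hUc.nonempty
  obtain ⟨v, hv⟩ := hVc.nonempty
  have hmem : ∀ {Z : Set (OnePoint ℂ)}, Z ⊆ frontier V → Z ≠ frontier V →
      u ∈ connectedComponentIn Zᶜ v := fun {Z} hZ hZne => by
    obtain ⟨y, hyV, hyZ⟩ := exists_of_ssubset (hZ.ssubset_of_ne hZne)
    have hyZ' : Disjoint {y} Z := disjoint_singleton_left.2 hyZ
    have hVy := union_subset_connectedComponentIn_compl hVc.isPreconnected hv
      (singleton_subset_iff.2 hyV.1) ((disjoint_frontier_of_isOpen hV).mono_right hZ) hyZ'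
    have hUy := union_subset_connectedComponentIn_compl hUc.isPreconnected hu
      (singleton_subset_iff.2 (hfr hyV).1)
      ((disjoint_frontier_of_isOpen hU).mono_right (hZ.trans hfr)) hyZ'
    rw [connectedComponentIn_eq (hVy (Or.inr rfl)), ← connectedComponentIn_eq (hUy (Or.inr rfl))]
    exact hUy (Or.inl hu)
  intro Y₁ Y₂ hY₁ hY₂ hY hpre
  by_contra! hne
  have huV := janiszewski hY₁ hY₂ hpre (hmem (hY ▸ subset_union_left) hne.1)
    (hmem (hY ▸ subset_union_right) hne.2)
  rw [hY, connectedComponentIn_compl_frontier hV hVc.isPreconnected hv] at huV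
  exact disjoint_left.1 hUV hu huV

end Sphere

theorem stmt_3_general (U V : Set RiemannSphere) (hUopen : IsOpen U)
    (hUsc : SimplyConnectedSpace U) (hbd : (frontier U).Nontrivial)
    (hV : ∃ x ∈ (frontier U)ᶜ, V = connectedComponentIn (frontier U)ᶜ x)
    (hVU : V ≠ U)
    (hint : (relInterior (frontier U) (frontier V)).Nonempty)
    (hirr : ∃ A : Set RiemannSphere, A.Finite ∧ A ⊆ frontier U ∧
      ∀ K : Set RiemannSphere, IsSubcontinuum K → K ⊆ frontier U → A ⊆ K →
        K = frontier U) :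
    ∃ K : Set RiemannSphere, K ⊆ frontier V ∧ IsSubcontinuum K ∧
      IsIndecomposableSet K ∧ (relInterior (frontier U) K).Nonempty := by
  obtain ⟨x, hx, rfl⟩ := hV
  obtain ⟨A, hAfin, hAX, hAirr⟩ := hirr
  have hUcon : IsConnected U := isConnected_iff_connectedSpace.2 inferInstance
  have hO : IsOpen (frontier U)ᶜ := isClosed_frontier.isOpen_compl
  have hfr := frontier_connectedComponentIn_subset hO x
  rw [compl_compl] at hfr
  have hX : IsSubcontinuum (frontier U) := ⟨isClosed_frontier.isCompact, hbd.nonempty,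
    isPreconnected_frontier_of_isPreconnected_compl hUopen hUcon.isPreconnected
      (isPreconnected_compl_of_isSimplyConnected hUopen hUsc)⟩
  have hdisj := disjoint_connectedComponentIn_compl_frontier hUopen hUcon.isPreconnected hVU
  have hYdisc := isDiscoherent_frontier hUopen hUcon hO.connectedComponentIn
    (isConnected_connectedComponentIn_iff.2 hx) hdisj hfr
  have hY : IsSubcontinuum (frontier (connectedComponentIn (frontier U)ᶜ x)) :=
    ⟨isClosed_frontier.isCompact, nonempty_of_nonempty_preimage (hint.mono interior_subset),
      hYdisc.isPreconnected isClosed_frontier⟩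
  exact hYdisc.exists_isIndecomposableSet_of_isIrreducibleAbout hY hfr hX hbd hint hAfin
    ⟨hAX, hAirr⟩

/-- Let `U ⊆ ℂ∞` be a simply connected open set whose boundary
`X = ∂U` has at least two points, and let `V ≠ U` be a connected component of `ℂ∞ \ X`
such that `∂V` has nonempty interior relative to `X`.  Assume that `X` is irreducible
about some finite subset of `X`, and that `∂V` is not monostratic.  Then `∂V` contains
an indecomposable subcontinuum with nonempty interior relative to `X`. -/
theorem stmt_3 (U V : Set RiemannSphere) (hUopen : IsOpen U)
    (hUsc : SimplyConnectedSpace U) (hbd : (frontier U).Nontrivial)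
    (hV : ∃ x ∈ (frontier U)ᶜ, V = connectedComponentIn (frontier U)ᶜ x)
    (hVU : V ≠ U)
    (hint : (relInterior (frontier U) (frontier V)).Nonempty)
    (hirr : ∃ A : Set RiemannSphere, A.Finite ∧ A ⊆ frontier U ∧
      ∀ K : Set RiemannSphere, IsSubcontinuum K → K ⊆ frontier U → A ⊆ K →
        K = frontier U)
    (hnotmono : ¬ IsMonostratic (frontier V)) :
    ∃ K : Set RiemannSphere, K ⊆ frontier V ∧ IsSubcontinuum K ∧
      IsIndecomposableSet K ∧ (relInterior (frontier U) K).Nonempty :=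
  stmt_3_general U V hUopen hUsc hbd hV hVU hint hirr
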